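/- arXiv:1102.4020 — 2 statements merged into one kernel-verified Lean document; each statement's English description precedes it below -/
import Mathlib

section
/- (Modica-type gradient estimate for traveling waves.) Let n ≥ 1, let F : ℝ → ℝ be C², and assume F(s) ≥ 0 for all s ∈ [−1, 1]. Let c > 0 and let u : ℝⁿ → ℝ be a C³ solution of Δu + c ∂u/∂x_n = F'(u) on ℝⁿ with |u| ≤ 1. Then |∇u(p)|² ≤ 2 F(u(p)) for every p ∈ ℝⁿ. -/
open Real Filter

/-- Partial derivative of `f : ℝⁿ → ℝ` in the `i`-th coordinate direction. -/
noncomputable def pd {n : ℕ} (i : Fin n) (f : (Fin n → ℝ) → ℝ)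
    (p : Fin n → ℝ) : ℝ :=
  deriv (fun t : ℝ => f (Function.update p i t)) (p i)

section PartialDerivatives

variable {n : ℕ} {f g : (Fin n → ℝ) → ℝ} {p : Fin n → ℝ}

lemma pd_eq_fderiv (i : Fin n) (hf : DifferentiableAt ℝ f p) :
    pd i f p = fderiv ℝ f p (Pi.single i 1) := by
  have hp : Function.update p i (p i) = p := Function.update_eq_self i p
  have h := (hasDerivAt_update p i (p i))
  have hf' : HasFDerivAt f (fderiv ℝ f p) (Function.update p i (p i)) := by
    rw [hp]; exact hf.hasFDerivAt
  exact (hf'.comp_hasDerivAt (p i) h).deriv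

lemma pd_funext (i : Fin n) (hf : Differentiable ℝ f) :
    pd i f = fun q => fderiv ℝ f q (Pi.single i 1) :=
  funext fun q => pd_eq_fderiv i (hf q)

lemma ContDiff.pd {m : WithTop ℕ∞} (i : Fin n) (hf : ContDiff ℝ (m + 1) f) :
    ContDiff ℝ m (pd i f) := by
  rw [pd_funext i (hf.differentiable (by simp))]
  exact (hf.fderiv_right le_rfl).clm_apply contDiff_const

lemma pd_comm (i j : Fin n) (hf : ContDiff ℝ 2 f) :
    pd i (pd j f) p = pd j (pd i f) p := by
  have hd : Differentiable ℝ f := hf.differentiable (by norm_num)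
  have hd' : DifferentiableAt ℝ (fderiv ℝ f) p :=
    (hf.fderiv_right (m := 1) (by norm_num)).differentiable (by norm_num) p
  have key : ∀ a b : Fin n, pd a (pd b f) p =
      fderiv ℝ (fderiv ℝ f) p (Pi.single a 1) (Pi.single b 1) := by
    intro a b
    rw [pd_funext b hd, pd_eq_fderiv a (hd'.clm_apply (differentiableAt_const _)),
      fderiv_clm_apply hd' (differentiableAt_const _)]
    simp
  rw [key, key]
  exact (hf.contDiffAt.isSymmSndFDerivAt (by simp)) _ _

lemma pd_const (i : Fin n) (a : ℝ) : pd i (fun _ => a) p = 0 := by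
  simp [pd]

lemma pd_add (i : Fin n) (hf : DifferentiableAt ℝ f p) (hg : DifferentiableAt ℝ g p) :
    pd i (fun q => f q + g q) p = pd i f p + pd i g p := by
  rw [pd_eq_fderiv i (hf.fun_add hg), pd_eq_fderiv i hf, pd_eq_fderiv i hg, fderiv_fun_add hf hg]
  rfl

lemma pd_mul (i : Fin n) (hf : DifferentiableAt ℝ f p) (hg : DifferentiableAt ℝ g p) :
    pd i (fun q => f q * g q) p = f p * pd i g p + g p * pd i f p := by
  rw [pd_eq_fderiv i (hf.fun_mul hg), pd_eq_fderiv i hf, pd_eq_fderiv i hg, fderiv_fun_mul hf hg]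
  rfl

lemma pd_sum {ι : Type*} (s : Finset ι) {f : ι → (Fin n → ℝ) → ℝ} (i : Fin n)
    (hf : ∀ j ∈ s, DifferentiableAt ℝ (f j) p) :
    pd i (fun q => ∑ j ∈ s, f j q) p = ∑ j ∈ s, pd i (f j) p := by
  rw [pd_eq_fderiv i (DifferentiableAt.fun_sum hf), fderiv_fun_sum hf,
    sum_apply]
  exact Finset.sum_congr rfl fun j hj => (pd_eq_fderiv i (hf j hj)).symm

lemma pd_comp {φ : ℝ → ℝ} (i : Fin n) (hφ : DifferentiableAt ℝ φ (f p))
    (hf : DifferentiableAt ℝ f p) :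
    pd i (fun q => φ (f q)) p = deriv φ (f p) * pd i f p := by
  have h := hφ.hasDerivAt.comp_hasFDerivAt p hf.hasFDerivAt
  rw [pd_eq_fderiv i hf, pd_eq_fderiv (f := fun q => φ (f q)) i h.differentiableAt]
  have h2 : fderiv ℝ (fun q => φ (f q)) p = _ := h.fderiv
  rw [h2]
  simp

lemma pd_coord (i j : Fin n) : pd i (fun q => q j) p = if i = j then 1 else 0 := by
  rw [pd_eq_fderiv i (differentiableAt_apply j p)]
  have : fderiv ℝ (fun q : Fin n → ℝ => q j) p = ContinuousLinearMap.proj j :=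
    (hasFDerivAt_apply j p).fderiv
  rw [this]
  simp [Pi.single_apply, eq_comm]

lemma IsLocalMax.pd_slice (i : Fin n) (h : IsLocalMax f p) :
    IsLocalMax (fun t : ℝ => f (Function.update p i t)) (p i) := by
  have hc : ContinuousAt (fun t : ℝ => Function.update p i t) (p i) :=
    (continuous_const.update i continuous_id).continuousAt
  have h' : IsLocalMax f (Function.update p i (p i)) := by simpa using h
  exact h'.comp_continuous hc

lemma IsLocalMax.pd_eq_zero (i : Fin n) (h : IsLocalMax f p) : pd i f p = 0 :=
  (h.pd_slice i).deriv_eq_zero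

lemma deriv_deriv_nonpos_of_isLocalMax {φ : ℝ → ℝ} {x : ℝ} (hφ : ContinuousAt φ x)
    (h : IsLocalMax φ x) : deriv (deriv φ) x ≤ 0 := by
  by_contra! hpos
  have hmin := isLocalMin_of_deriv_deriv_pos hpos h.deriv_eq_zero hφ
  have hconst : φ =ᶠ[nhds x] fun _ => φ x := by
    filter_upwards [h, hmin] with y h1 h2 using le_antisymm h1 h2
  have := hconst.deriv.deriv_eq
  simp at this
  linarith

lemma IsLocalMax.pd_pd_nonpos (i : Fin n) (hf : Continuous f) (h : IsLocalMax f p) :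
    pd i (pd i f) p ≤ 0 := by
  have key : pd i (pd i f) p = deriv (deriv fun t : ℝ => f (Function.update p i t)) (p i) := by
    simp [pd]
  rw [key]
  exact deriv_deriv_nonpos_of_isLocalMax
    (hf.comp (continuous_const.update i continuous_id)).continuousAt (h.pd_slice i)

end PartialDerivatives

section DriftLaplacian

/-- The operator `Δ + c ∂ₖ` on functions `ℝⁿ → ℝ`. -/
noncomputable def driftLaplacian {n : ℕ} (k : Fin n) (c : ℝ) (f : (Fin n → ℝ) → ℝ)
    (p : Fin n → ℝ) : ℝ :=
  (∑ i, pd i (pd i f) p) + c * pd k f p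

/-- The squared Euclidean norm of the gradient. -/
noncomputable def gradSq {n : ℕ} (f : (Fin n → ℝ) → ℝ) (p : Fin n → ℝ) : ℝ :=
  ∑ i, pd i f p ^ 2

variable {n : ℕ} {k : Fin n} {c : ℝ} {f g : (Fin n → ℝ) → ℝ} {p : Fin n → ℝ}

lemma gradSq_nonneg : 0 ≤ gradSq f p := Finset.sum_nonneg fun _ _ => sq_nonneg _

lemma pd_differentiable (i : Fin n) (hf : ContDiff ℝ 2 f) : Differentiable ℝ (pd i f) :=
  (ContDiff.pd (m := 1) i (by simpa [one_add_one_eq_two] using hf)).differentiable (by norm_num)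

lemma driftLaplacian_const (a : ℝ) : driftLaplacian k c (fun _ => a) p = 0 := by
  simp [driftLaplacian, pd]

lemma driftLaplacian_add (hf : ContDiff ℝ 2 f) (hg : ContDiff ℝ 2 g) :
    driftLaplacian k c (fun q => f q + g q) p =
      driftLaplacian k c f p + driftLaplacian k c g p := by
  have hf1 : Differentiable ℝ f := hf.differentiable (by norm_num)
  have hg1 : Differentiable ℝ g := hg.differentiable (by norm_num)
  have h : ∀ i, pd i (fun q => f q + g q) = fun q => pd i f q + pd i g q :=
    fun i => funext fun q => pd_add i (hf1 q) (hg1 q)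
  simp only [driftLaplacian, h,
    fun i => pd_add i (pd_differentiable i hf p) (pd_differentiable i hg p),
    Finset.sum_add_distrib]
  ring

lemma driftLaplacian_mul (hf : ContDiff ℝ 2 f) (hg : ContDiff ℝ 2 g) :
    driftLaplacian k c (fun q => f q * g q) p =
      f p * driftLaplacian k c g p + g p * driftLaplacian k c f p +
        2 * ∑ i, pd i f p * pd i g p := by
  have hf1 : Differentiable ℝ f := hf.differentiable (by norm_num)
  have hg1 : Differentiable ℝ g := hg.differentiable (by norm_num)
  have h : ∀ i, pd i (fun q => f q * g q) = fun q => f q * pd i g q + g q * pd i f q :=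
    fun i => funext fun q => pd_mul i (hf1 q) (hg1 q)
  have h2 : ∀ i, pd i (fun q => f q * pd i g q + g q * pd i f q) p =
      f p * pd i (pd i g) p + g p * pd i (pd i f) p + 2 * (pd i f p * pd i g p) := by
    intro i
    have hf2 := pd_differentiable i hf p
    have hg2 := pd_differentiable i hg p
    rw [pd_add i ((hf1 p).fun_mul hg2) ((hg1 p).fun_mul hf2), pd_mul i (hf1 p) hg2,
      pd_mul i (hg1 p) hf2]
    ring
  simp only [driftLaplacian, h, h2, Finset.sum_add_distrib, ← Finset.mul_sum]
  ring

lemma driftLaplacian_const_mul (a : ℝ) (hf : ContDiff ℝ 2 f) :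
    driftLaplacian k c (fun q => a * f q) p = a * driftLaplacian k c f p := by
  rw [driftLaplacian_mul contDiff_const hf, driftLaplacian_const]
  simp [pd_const]

lemma driftLaplacian_sq (hf : ContDiff ℝ 2 f) :
    driftLaplacian k c (fun q => f q ^ 2) p =
      2 * f p * driftLaplacian k c f p + 2 * gradSq f p := by
  simp only [pow_two, gradSq]
  rw [driftLaplacian_mul hf hf]
  ring

lemma driftLaplacian_sum {ι : Type*} (s : Finset ι) {f : ι → (Fin n → ℝ) → ℝ}
    (hf : ∀ j, ContDiff ℝ 2 (f j)) :
    driftLaplacian k c (fun q => ∑ j ∈ s, f j q) p = ∑ j ∈ s, driftLaplacian k c (f j) p := by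
  classical
  induction s using Finset.induction_on with
  | empty => simp [driftLaplacian_const]
  | insert a s ha ih =>
    simp only [Finset.sum_insert ha]
    rw [driftLaplacian_add (hf a) (ContDiff.sum fun j _ => hf j), ih]

lemma ContDiff.deriv_of_two {φ : ℝ → ℝ} (hφ : ContDiff ℝ 2 φ) : ContDiff ℝ 1 (deriv φ) :=
  ((contDiff_succ_iff_deriv (n := 1)).1 (by simpa [one_add_one_eq_two] using hφ)).2.2

lemma driftLaplacian_comp {φ : ℝ → ℝ} (hφ : ContDiff ℝ 2 φ) (hf : ContDiff ℝ 2 f) :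
    driftLaplacian k c (fun q => φ (f q)) p =
      deriv (deriv φ) (f p) * gradSq f p + deriv φ (f p) * driftLaplacian k c f p := by
  have hf1 : Differentiable ℝ f := hf.differentiable (by norm_num)
  have hφ1 : Differentiable ℝ φ := hφ.differentiable (by norm_num)
  have hφ2 : Differentiable ℝ (deriv φ) := hφ.deriv_of_two.differentiable (by norm_num)
  have h : ∀ i, pd i (fun q => φ (f q)) = fun q => deriv φ (f q) * pd i f q :=
    fun i => funext fun q => pd_comp i (hφ1 _) (hf1 q)
  have h2 : ∀ i, pd i (fun q => deriv φ (f q) * pd i f q) p =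
      deriv (deriv φ) (f p) * pd i f p ^ 2 + deriv φ (f p) * pd i (pd i f) p := by
    intro i
    rw [pd_mul (f := fun q => deriv φ (f q)) i ((hφ2 _).comp p (hf1 p)) (pd_differentiable i hf p),
      pd_comp i (hφ2 _) (hf1 p)]
    ring
  simp only [driftLaplacian, gradSq, h, h2, Finset.sum_add_distrib, ← Finset.mul_sum]
  ring

lemma driftLaplacian_pd (j : Fin n) (hf : ContDiff ℝ 3 f) :
    driftLaplacian k c (pd j f) p = pd j (driftLaplacian k c f) p := by
  have h2 : ∀ i, ContDiff ℝ 2 (pd i f) := fun i =>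
    ContDiff.pd (m := 2) i (by simpa [two_add_one_eq_three] using hf)
  have hf2 : ContDiff ℝ 2 f := hf.of_le (by norm_num)
  have hc : ∀ i, pd i (pd j f) = pd j (pd i f) := fun i => funext fun q => pd_comm i j hf2
  unfold driftLaplacian
  rw [pd_add j (DifferentiableAt.fun_sum fun i _ => pd_differentiable i (h2 i) p)
    ((differentiableAt_const c).fun_mul (pd_differentiable k hf2 p)),
    pd_sum _ _ fun i _ => pd_differentiable i (h2 i) p,
    pd_mul j (differentiableAt_const c) (pd_differentiable k hf2 p), pd_const]
  simp only [hc, fun i => pd_comm (p := p) i j (h2 i)]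
  ring

lemma IsLocalMax.driftLaplacian_nonpos (hf : Continuous f) (h : IsLocalMax f p) :
    driftLaplacian k c f p ≤ 0 := by
  simp only [driftLaplacian, h.pd_eq_zero, mul_zero, add_zero]
  exact Finset.sum_nonpos fun i _ => h.pd_pd_nonpos i hf

end DriftLaplacian

section Bernstein

variable {n : ℕ} {k : Fin n} {c : ℝ} {F : ℝ → ℝ} {u : (Fin n → ℝ) → ℝ} {p : Fin n → ℝ}

/-- The squared Euclidean distance to `a`. -/
def sqDist (a q : Fin n → ℝ) : ℝ := ∑ i, (q i - a i) ^ 2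

lemma sqDist_nonneg (a q : Fin n → ℝ) : 0 ≤ sqDist a q :=
  Finset.sum_nonneg fun _ _ => sq_nonneg _

lemma sq_le_sqDist (a q : Fin n → ℝ) (i : Fin n) : (q i - a i) ^ 2 ≤ sqDist a q :=
  Finset.single_le_sum (f := fun i => (q i - a i) ^ 2) (fun _ _ => sq_nonneg _)
    (Finset.mem_univ i)

lemma contDiff_sqDist (a : Fin n → ℝ) {m : WithTop ℕ∞} : ContDiff ℝ m (sqDist a) := by
  unfold sqDist
  fun_prop

lemma pd_sqDist (a : Fin n → ℝ) (i : Fin n) : pd i (sqDist a) p = 2 * (p i - a i) := by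
  unfold sqDist
  rw [pd_sum _ _ fun j _ => by fun_prop]
  have h : ∀ j, pd i (fun q => (q j - a j) ^ 2) p = if i = j then 2 * (p j - a j) else 0 := by
    intro j
    have h1 := pd_add (p := p) i (differentiableAt_apply j p)
      (differentiableAt_const (-a j))
    simp only [← sub_eq_add_neg, pd_const, pd_coord] at h1
    have h2 := pd_mul (p := p) (f := fun q => q j - a j) (g := fun q => q j - a j) i
      (by fun_prop) (by fun_prop)
    simp only [← pow_two] at h2
    rw [h2, h1]
    split_ifs <;> ring
  simp [h]

lemma driftLaplacian_sqDist (a : Fin n → ℝ) :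
    driftLaplacian k c (sqDist a) p = 2 * n + 2 * c * (p k - a k) := by
  have h : ∀ i, pd i (sqDist a) = fun q => 2 * (q i + -a i) :=
    fun i => funext fun q => by rw [pd_sqDist, sub_eq_add_neg]
  have h2 : ∀ i, pd i (fun q => 2 * (q i + -a i)) p = 2 := by
    intro i
    rw [pd_mul i (differentiableAt_const _) (by fun_prop), pd_add i (by fun_prop) (by fun_prop),
      pd_coord, pd_const, pd_const]
    simp
  simp only [driftLaplacian, h, h2]
  simp
  ring

lemma contDiff_pd_of_three (i : Fin n) (hu : ContDiff ℝ 3 u) : ContDiff ℝ 2 (pd i u) :=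
  ContDiff.pd (m := 2) i (by simpa [two_add_one_eq_three] using hu)

lemma contDiff_gradSq (hu : ContDiff ℝ 3 u) : ContDiff ℝ 2 (gradSq u) :=
  ContDiff.sum fun i _ => (contDiff_pd_of_three i hu).pow 2

lemma pd_gradSq (i : Fin n) (hu : ContDiff ℝ 3 u) :
    pd i (gradSq u) p = 2 * ∑ j, pd j u p * pd i (pd j u) p := by
  have hd : ∀ j, DifferentiableAt ℝ (pd j u) p := fun j =>
    (contDiff_pd_of_three j hu).differentiable (by norm_num) p
  unfold gradSq
  rw [pd_sum _ _ fun j _ => (hd j).fun_pow 2, Finset.mul_sum]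
  refine Finset.sum_congr rfl fun j _ => ?_
  simp only [pow_two]
  rw [pd_mul i (hd j) (hd j)]
  ring

/-- Bochner's formula for solutions of `Δu + c ∂ₖu = F'(u)`. -/
lemma driftLaplacian_gradSq (hF : ContDiff ℝ 2 F) (hu : ContDiff ℝ 3 u)
    (heq : ∀ q, driftLaplacian k c u q = deriv F (u q)) :
    driftLaplacian k c (gradSq u) p =
      2 * (∑ j, gradSq (pd j u) p) + 2 * deriv (deriv F) (u p) * gradSq u p := by
  have hd : Differentiable ℝ (deriv F) := hF.deriv_of_two.differentiable (by norm_num)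
  have hL : ∀ j, driftLaplacian k c (pd j u) p = deriv (deriv F) (u p) * pd j u p := by
    intro j
    rw [driftLaplacian_pd j hu, funext heq, pd_comp j (hd _) (hu.differentiable (by norm_num) p)]
  have h1 : driftLaplacian k c (gradSq u) p =
      ∑ j, driftLaplacian k c (fun q => pd j u q ^ 2) p :=
    driftLaplacian_sum _ fun j => (contDiff_pd_of_three j hu).pow 2
  rw [h1]
  simp only [fun j => driftLaplacian_sq (p := p) (k := k) (c := c) (contDiff_pd_of_three j hu), hL,
    Finset.sum_add_distrib, ← Finset.mul_sum]
  have h2 : ∑ j, 2 * pd j u p * (deriv (deriv F) (u p) * pd j u p) =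
      2 * deriv (deriv F) (u p) * gradSq u p := by
    rw [gradSq, Finset.mul_sum]
    exact Finset.sum_congr rfl fun j _ => by ring
  rw [h2, add_comm]

lemma pd_one_sub_sqDist (a : Fin n → ℝ) (i : Fin n) :
    pd i (fun q => 1 + -1 * sqDist a q) p = -2 * (p i - a i) := by
  have hd : DifferentiableAt ℝ (sqDist a) p :=
    (contDiff_sqDist a (m := 1)).differentiable (by norm_num) p
  rw [pd_add i (differentiableAt_const _) ((differentiableAt_const _).fun_mul hd), pd_const,
    pd_mul i (differentiableAt_const _) hd, pd_const, pd_sqDist]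
  ring

lemma driftLaplacian_one_sub_sqDist (a : Fin n → ℝ) :
    driftLaplacian k c (fun q => 1 + -1 * sqDist a q) p = -(2 * n + 2 * c * (p k - a k)) := by
  rw [driftLaplacian_add contDiff_const (contDiff_const.mul (contDiff_sqDist a)),
    driftLaplacian_const, driftLaplacian_const_mul _ (contDiff_sqDist a), driftLaplacian_sqDist]
  ring

lemma isCompact_sqDist_le (a : Fin n → ℝ) (r : ℝ) : IsCompact {q | sqDist a q ≤ r} := by
  refine Metric.isCompact_of_isClosed_isBounded
    (isClosed_le (contDiff_sqDist a (m := 0)).continuous continuous_const) ?_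
  refine (Metric.isBounded_closedBall (x := a) (r := √r)).subset fun q hq => ?_
  rw [Metric.mem_closedBall, dist_pi_le_iff (Real.sqrt_nonneg _)]
  intro i
  rw [Real.dist_eq]
  exact Real.abs_le_sqrt ((sq_le_sqDist a q i).trans hq)

/-- The interior inequality in Bernstein's method with cutoff `(1 - |q - a|²)²`. -/
lemma driftLaplacian_cutoff_ge (hF : ContDiff ℝ 2 F) (hu : ContDiff ℝ 3 u) (hc : 0 ≤ c)
    (heq : ∀ q, driftLaplacian k c u q = deriv F (u q)) (hbd : |u p| ≤ 1)
    {K l : ℝ} (hK1 : |deriv F (u p)| ≤ K) (hK2 : |deriv (deriv F) (u p)| ≤ K) (hl : 0 ≤ l)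
    {a : Fin n → ℝ} (hp : sqDist a p ≤ 1) :
    (2 * l - (4 * n + 4 * c + 32 + 2 * K)) * gradSq u p - 2 * l * K ≤
      driftLaplacian k c
        (fun q => (1 + -1 * sqDist a q) ^ 2 * gradSq u q + l * u q ^ 2) p := by
  have hu2 : ContDiff ℝ 2 u := hu.of_le (by norm_num)
  have hη : ContDiff ℝ 2 (fun q => 1 + -1 * sqDist a q) :=
    contDiff_const.add (contDiff_const.mul (contDiff_sqDist a))
  have hη1 : DifferentiableAt ℝ (fun q => 1 + -1 * sqDist a q) p :=
    hη.differentiable (by norm_num) p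
  have hw := contDiff_gradSq hu
  have hpdη : ∀ i, pd i (fun q => (1 + -1 * sqDist a q) ^ 2) p =
      -4 * (1 - sqDist a p) * (p i - a i) := by
    intro i
    simp only [pow_two]
    rw [pd_mul i hη1 hη1, pd_one_sub_sqDist]
    ring
  have hgradη : gradSq (fun q => 1 + -1 * sqDist a q) p = 4 * sqDist a p := by
    simp only [gradSq, pd_one_sub_sqDist]
    rw [sqDist, Finset.mul_sum]
    exact Finset.sum_congr rfl fun i _ => by ring
  rw [driftLaplacian_add ((hη.pow 2).mul hw) (contDiff_const.mul (hu2.pow 2)),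
    driftLaplacian_mul (hη.pow 2) hw, driftLaplacian_const_mul _ (hu2.pow 2),
    driftLaplacian_sq hη, driftLaplacian_sq hu2, driftLaplacian_gradSq hF hu heq, heq,
    driftLaplacian_one_sub_sqDist, hgradη]
  simp only [hpdη, pd_gradSq _ hu]
  set r := sqDist a p with hr
  set w := gradSq u p with hwdef
  set H := ∑ j, gradSq (pd j u) p with hH
  have hr0 : 0 ≤ r := sqDist_nonneg a p
  have hw0 : 0 ≤ w := gradSq_nonneg
  have hcross : -(2 * (1 - r) ^ 2 * H) - 32 * r * w ≤
      2 * ∑ i, -4 * (1 - r) * (p i - a i) * (2 * ∑ j, pd j u p * pd i (pd j u) p) := by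
    have hs : 0 ≤ ∑ i, ∑ j, 2 * ((1 - r) * pd i (pd j u) p - 4 * (p i - a i) * pd j u p) ^ 2 :=
      Finset.sum_nonneg fun i _ => Finset.sum_nonneg fun j _ => by positivity
    have h1 : ∑ i, ∑ j, 2 * ((1 - r) * pd i (pd j u) p - 4 * (p i - a i) * pd j u p) ^ 2 =
        2 * (1 - r) ^ 2 * H + 32 * (r * w) +
        2 * ∑ i, -4 * (1 - r) * (p i - a i) * (2 * ∑ j, pd j u p * pd i (pd j u) p) := by
      have e1 : H = ∑ i, ∑ j, pd i (pd j u) p ^ 2 := Finset.sum_comm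
      have e2 : r * w = ∑ i, ∑ j, (p i - a i) ^ 2 * pd j u p ^ 2 := by
        rw [hr, hwdef, sqDist, gradSq, Finset.sum_mul_sum]
      rw [e1, e2]
      simp only [Finset.mul_sum, ← Finset.sum_add_distrib]
      exact Finset.sum_congr rfl fun i _ => Finset.sum_congr rfl fun j _ => by ring
    linarith
  have hrw : r * w ≤ w := by nlinarith
  have hy : |p k - a k| ≤ 1 := by
    rw [← sq_le_one_iff_abs_le_one]
    exact (sq_le_sqDist a p k).trans hp
  have hη01 : (1 - r) ^ 2 ≤ 1 := by nlinarith
  have hF2 : -K * w ≤ (1 - r) ^ 2 * (deriv (deriv F) (u p) * w) := by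
    have h1 : -K ≤ (1 - r) ^ 2 * deriv (deriv F) (u p) := by
      have h2 := abs_le.1 hK2
      have hK0 : 0 ≤ K := (abs_nonneg _).trans hK2
      nlinarith [sq_nonneg (1 - r)]
    nlinarith
  have hF1 : -K ≤ u p * deriv F (u p) := by
    refine (abs_le.1 ?_).1
    rw [abs_mul]
    nlinarith [abs_nonneg (u p), abs_nonneg (deriv F (u p))]
  have hLη : -(4 * n + 4 * c) * w ≤
      w * (2 * (1 - r) * -(2 * n + 2 * c * (p k - a k))) := by
    have h1 : (1 - r) * (2 * n + 2 * c * (p k - a k)) ≤ 2 * n + 2 * c := by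
      have h2 : 2 * n + 2 * c * (p k - a k) ≤ 2 * n + 2 * c := by nlinarith [abs_le.1 hy]
      have h3 : (0 : ℝ) ≤ 2 * n + 2 * c := by positivity
      nlinarith
    nlinarith
  have hwr : 0 ≤ w * r := mul_nonneg hw0 hr0
  have hlF := mul_le_mul_of_nonneg_left hF1 hl
  nlinarith

lemma exists_gradSq_le (hF : ContDiff ℝ 2 F) (hu : ContDiff ℝ 3 u) (hc : 0 ≤ c)
    (heq : ∀ q, driftLaplacian k c u q = deriv F (u q)) (hbd : ∀ q, |u q| ≤ 1)
    {K : ℝ} (hK1 : ∀ s ∈ Set.Icc (-1 : ℝ) 1, |deriv F s| ≤ K)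
    (hK2 : ∀ s ∈ Set.Icc (-1 : ℝ) 1, |deriv (deriv F) s| ≤ K) :
    ∃ S : ℝ, ∀ q, gradSq u q ≤ S := by
  have hmem : ∀ q, u q ∈ Set.Icc (-1 : ℝ) 1 := fun q => abs_le.1 (hbd q)
  have hK0 : 0 ≤ K := (abs_nonneg _).trans (hK1 0 (by norm_num))
  set l : ℝ := 2 * n + 2 * c + 17 + K with hl
  have hl0 : 0 ≤ l := by positivity
  refine ⟨l * K + l, fun a => ?_⟩
  set Z : (Fin n → ℝ) → ℝ :=
    fun q => (1 + -1 * sqDist a q) ^ 2 * gradSq u q + l * u q ^ 2 with hZ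
  have hZc : Continuous Z := by
    have h1 := (contDiff_sqDist a (m := 0)).continuous
    have h2 := (contDiff_gradSq hu).continuous
    have h3 := hu.continuous
    fun_prop
  have haa : sqDist a a = 0 := by simp [sqDist]
  obtain ⟨p, hp, hmax⟩ := (isCompact_sqDist_le a 1).exists_isMaxOn
    ⟨a, by simp [haa]⟩ hZc.continuousOn
  have hpa : Z a ≤ Z p := hmax (by simp [haa])
  have hZa : gradSq u a ≤ Z a := by
    simp only [hZ, haa]
    nlinarith [mul_nonneg hl0 (sq_nonneg (u a))]
  have hu1 : l * u p ^ 2 ≤ l := by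
    have : u p ^ 2 ≤ 1 := (sq_le_one_iff_abs_le_one _).2 (hbd p)
    nlinarith
  suffices h : (1 + -1 * sqDist a p) ^ 2 * gradSq u p ≤ l * K by
    have : Z p ≤ l * K + l := add_le_add h hu1
    linarith
  rcases (show sqDist a p ≤ 1 from hp).lt_or_eq with hlt | heq1
  · have hloc : IsLocalMax Z p := by
      have hopen : IsOpen {q | sqDist a q < 1} :=
        isOpen_lt (contDiff_sqDist a (m := 0)).continuous continuous_const
      filter_upwards [hopen.mem_nhds hlt] with q hq
      exact hmax (le_of_lt hq)
    have h1 := driftLaplacian_cutoff_ge hF hu hc heq (hbd p) (hK1 _ (hmem p)) (hK2 _ (hmem p))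
      hl0 hlt.le
    have h2 := h1.trans (hloc.driftLaplacian_nonpos hZc)
    have hw : gradSq u p ≤ l * K := by
      rw [hl] at h2 ⊢
      nlinarith
    have hr0 := sqDist_nonneg a p
    have hη : (1 + -1 * sqDist a p) ^ 2 ≤ 1 := by nlinarith
    have hw0 : 0 ≤ gradSq u p := gradSq_nonneg
    nlinarith
  · rw [heq1]
    norm_num
    positivity

end Bernstein

section Modica

variable {n : ℕ} {k : Fin n} {c : ℝ} {F G : ℝ → ℝ} {u : (Fin n → ℝ) → ℝ} {p : Fin n → ℝ}

/-- The maximum principle for `|∇u|² - 2 G(u) - ε |q|²`, combined with Bochner's formula. -/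
lemma modica_inequality_of_isLocalMax (hF : ContDiff ℝ 2 F) (hG : ContDiff ℝ 2 G)
    (hu : ContDiff ℝ 3 u) (heq : ∀ q, driftLaplacian k c u q = deriv F (u q))
    {ε : ℝ} (hε : 0 ≤ ε)
    (hmax : IsLocalMax (fun q => gradSq u q + (-2 * G (u q) + -ε * sqDist 0 q)) p) :
    gradSq u p * (deriv G (u p) * (deriv G (u p) - deriv F (u p)) +
        (deriv (deriv F) (u p) - deriv (deriv G) (u p)) * gradSq u p) ≤
      gradSq u p * (ε * (n + c * p k)) +
        2 * ε * |deriv G (u p)| * (√(gradSq u p) * √(sqDist 0 p)) := by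
  have hu2 : ContDiff ℝ 2 u := hu.of_le (by norm_num)
  have hw := contDiff_gradSq hu
  have hGu : ContDiff ℝ 2 (fun q => G (u q)) := hG.comp hu2
  have hs : ContDiff ℝ 2 (sqDist (0 : Fin n → ℝ)) := contDiff_sqDist 0
  have hGu' : ContDiff ℝ 2 (fun q => -2 * G (u q)) := contDiff_const.mul hGu
  have hs' : ContDiff ℝ 2 (fun q => -ε * sqDist (0 : Fin n → ℝ) q) := contDiff_const.mul hs
  have hL := hmax.driftLaplacian_nonpos (k := k) (c := c) (hw.add (hGu'.add hs')).continuous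
  rw [driftLaplacian_add hw (hGu'.add hs'), driftLaplacian_add hGu' hs',
    driftLaplacian_const_mul _ hGu, driftLaplacian_const_mul _ hs, driftLaplacian_comp hG hu2,
    driftLaplacian_gradSq hF hu heq, heq, driftLaplacian_sqDist] at hL
  have hgrad : ∀ i, ∑ j, pd j u p * pd i (pd j u) p = deriv G (u p) * pd i u p + ε * p i := by
    intro i
    have h := hmax.pd_eq_zero i
    have h2 : (2 : WithTop ℕ∞) ≠ 0 := by norm_num
    rw [pd_add i (hw.differentiable h2 p) ((hGu'.add hs').differentiable h2 p),
      pd_add i (hGu'.differentiable h2 p) (hs'.differentiable h2 p),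
      pd_mul i (differentiableAt_const _) (hGu.differentiable h2 p),
      pd_mul i (differentiableAt_const _) (hs.differentiable h2 p), pd_const, pd_const,
      pd_comp i (hG.differentiable h2 _) (hu2.differentiable h2 p), pd_sqDist,
      pd_gradSq i hu] at h
    simp only [Pi.zero_apply] at h
    linarith
  set w := gradSq u p with hwdef
  set H := ∑ j, gradSq (pd j u) p with hH
  have hw0 : 0 ≤ w := gradSq_nonneg
  have hcs : ∑ i, (deriv G (u p) * pd i u p + ε * p i) ^ 2 ≤ w * H := by
    have e1 : H = ∑ i, ∑ j, pd i (pd j u) p ^ 2 := Finset.sum_comm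
    rw [e1, Finset.mul_sum]
    refine Finset.sum_le_sum fun i _ => ?_
    rw [← hgrad i]
    exact Finset.sum_mul_sq_le_sq_mul_sq _ _ _
  have hexp : ∑ i, (deriv G (u p) * pd i u p + ε * p i) ^ 2 = deriv G (u p) ^ 2 * w +
      2 * ε * (deriv G (u p) * ∑ i, pd i u p * p i) + ε ^ 2 * sqDist 0 p := by
    rw [hwdef, gradSq, sqDist]
    simp only [Finset.mul_sum, ← Finset.sum_add_distrib]
    exact Finset.sum_congr rfl fun i _ => by simp; ring
  have hdot : |∑ i, pd i u p * p i| ≤ √w * √(sqDist 0 p) := by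
    rw [← Real.sqrt_mul hw0]
    refine Real.abs_le_sqrt ?_
    simpa [hwdef, gradSq, sqDist] using
      Finset.sum_mul_sq_le_sq_mul_sq Finset.univ (fun i => pd i u p) p
  have hdot' : -(|deriv G (u p)| * (√w * √(sqDist 0 p))) ≤
      deriv G (u p) * ∑ i, pd i u p * p i := by
    refine (abs_le.1 ?_).1
    rw [abs_mul]
    exact mul_le_mul_of_nonneg_left hdot (abs_nonneg _)
  have hdot2 := mul_le_mul_of_nonneg_left hdot' (mul_nonneg zero_le_two hε)
  have hr : 0 ≤ ε ^ 2 * sqDist 0 p := mul_nonneg (sq_nonneg _) (sqDist_nonneg _ _)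
  have hLw := mul_le_mul_of_nonneg_left hL hw0
  simp only [Pi.zero_apply] at hLw
  nlinarith

lemma exists_isMax_sub_sqDist {f : (Fin n → ℝ) → ℝ} (hf : Continuous f) {S : ℝ}
    (hS : ∀ q, f q ≤ S) {ε : ℝ} (hε : 0 < ε) :
    ∃ p, ∀ q, f q + -ε * sqDist 0 q ≤ f p + -ε * sqDist 0 p := by
  have hs := (contDiff_sqDist (0 : Fin n → ℝ) (m := 0)).continuous
  refine Continuous.exists_forall_ge' (by fun_prop) 0 ?_
  have hK := (isCompact_sqDist_le (0 : Fin n → ℝ) ((S - f 0) / ε)).compl_mem_cocompact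
  filter_upwards [hK] with q hq
  have hq' : (S - f 0) / ε < sqDist 0 q := not_le.1 hq
  rw [div_lt_iff₀ hε] at hq'
  have h0 : sqDist (0 : Fin n → ℝ) 0 = 0 := by simp [sqDist]
  rw [h0]
  nlinarith [hS q]

lemma exists_bound_deriv (hF : ContDiff ℝ 2 F) :
    ∃ K, (∀ s ∈ Set.Icc (-1 : ℝ) 1, |deriv F s| ≤ K) ∧
      ∀ s ∈ Set.Icc (-1 : ℝ) 1, |deriv (deriv F) s| ≤ K := by
  have h1 := hF.deriv_of_two
  obtain ⟨A, hA⟩ := isCompact_Icc.exists_bound_of_continuousOn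
    (s := Set.Icc (-1 : ℝ) 1) h1.continuous.continuousOn
  obtain ⟨B, hB⟩ := isCompact_Icc.exists_bound_of_continuousOn
    (s := Set.Icc (-1 : ℝ) 1) (h1.continuous_deriv le_rfl).continuousOn
  exact ⟨max A B, fun s hs => (hA s hs).trans (le_max_left _ _),
    fun s hs => (hB s hs).trans (le_max_right _ _)⟩

lemma hasDerivAt_exp_barrier (a b s : ℝ) :
    HasDerivAt (fun s => a * exp (-b * (s + 1))) (-b * a * exp (-b * (s + 1))) s := by
  have h := (((hasDerivAt_id s).add_const 1).const_mul (-b)).exp.const_mul a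
  refine h.congr_deriv ?_
  simp only [id, mul_one]
  ring

lemma deriv_add_barrier (hF : ContDiff ℝ 2 F) (m b : ℝ) :
    deriv (fun s => F s + (m + -m * exp (-b * (s + 1)))) =
      fun s => deriv F s + b * m * exp (-b * (s + 1)) := by
  funext s
  have h := ((hF.differentiable (by norm_num) s).hasDerivAt).add
    ((hasDerivAt_exp_barrier (-m) b s).const_add m)
  refine h.deriv.trans ?_
  ring

lemma deriv_deriv_add_barrier (hF : ContDiff ℝ 2 F) (m b s : ℝ) :
    deriv (deriv (fun s => F s + (m + -m * exp (-b * (s + 1))))) s =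
      deriv (deriv F) s - b * (b * m * exp (-b * (s + 1))) := by
  rw [deriv_add_barrier hF]
  have h := ((hF.deriv_of_two.differentiable (by norm_num) s).hasDerivAt).add
    (hasDerivAt_exp_barrier (b * m) b s)
  refine h.deriv.trans ?_
  ring

lemma exists_pos_mul_lt_and_mul_le {a m C D : ℝ} (ha : 0 < a) (hm : 0 < m) (hC : 0 ≤ C)
    (hD : 0 ≤ D) : ∃ δ : ℝ, 0 < δ ∧ δ ≤ 1 ∧ δ * C < a ∧ δ * D ≤ m := by
  refine ⟨min 1 (min (a / (C + 1)) (m / (D + 1))), by positivity, min_le_left _ _, ?_, ?_⟩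
  · have h1 : min 1 (min (a / (C + 1)) (m / (D + 1))) ≤ a / (C + 1) :=
      (min_le_right _ _).trans (min_le_left _ _)
    refine (mul_le_mul_of_nonneg_right h1 hC).trans_lt ?_
    rw [div_mul_eq_mul_div, div_lt_iff₀ (by positivity)]
    nlinarith
  · have h1 : min 1 (min (a / (C + 1)) (m / (D + 1))) ≤ m / (D + 1) :=
      (min_le_right _ _).trans (min_le_right _ _)
    refine (mul_le_mul_of_nonneg_right h1 hD).trans ?_
    rw [div_mul_eq_mul_div, div_le_iff₀ (by positivity)]
    nlinarith

set_option maxHeartbeats 400000 in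
/-- Modica's gradient estimate: otherwise adding a small concave exponential `h` to `F` makes
`|∇u|² - 2 (F + h)(u)` a strict subsolution near its almost-maximum points. -/
theorem gradSq_le_two_mul (hF : ContDiff ℝ 2 F) (hFpos : ∀ s ∈ Set.Icc (-1 : ℝ) 1, 0 ≤ F s)
    (hc : 0 ≤ c) (hu : ContDiff ℝ 3 u) (hbd : ∀ q, |u q| ≤ 1)
    (heq : ∀ q, driftLaplacian k c u q = deriv F (u q)) (y : Fin n → ℝ) :
    gradSq u y ≤ 2 * F (u y) := by
  have hmem : ∀ q, u q ∈ Set.Icc (-1 : ℝ) 1 := fun q => abs_le.1 (hbd q)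
  obtain ⟨K, hK1, hK2⟩ := exists_bound_deriv hF
  have hK0 : 0 ≤ K := (abs_nonneg _).trans (hK1 0 (by norm_num))
  obtain ⟨S, hS⟩ := exists_gradSq_le hF hu hc heq hbd hK1 hK2
  have hS0 : 0 ≤ S := gradSq_nonneg.trans (hS y)
  by_contra! hlt
  obtain ⟨m, hm⟩ : ∃ m, gradSq u y - 2 * F (u y) = 4 * m :=
    ⟨_, (mul_div_cancel₀ _ four_ne_zero).symm⟩
  have hm0 : 0 < m := by linarith
  obtain ⟨b, hb⟩ : ∃ b, b * m = K + 1 := ⟨(K + 1) / m, div_mul_cancel₀ _ hm0.ne'⟩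
  have hb0 : 0 < b := pos_of_mul_pos_left (by rw [hb]; positivity) hm0.le
  set h : ℝ → ℝ := fun s => m + -m * exp (-b * (s + 1)) with hh
  set G : ℝ → ℝ := fun s => F s + h s with hGdef
  have hG : ContDiff ℝ 2 G := hF.add (by fun_prop)
  have hexp : ∀ s ∈ Set.Icc (-1 : ℝ) 1,
      exp (-b * 2) ≤ exp (-b * (s + 1)) ∧ exp (-b * (s + 1)) ≤ 1 := by
    intro s hs
    refine ⟨exp_le_exp.2 ?_, exp_le_one_iff.2 ?_⟩ <;> nlinarith [hs.1, hs.2]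
  have hh0 : ∀ q, 0 ≤ h (u q) ∧ h (u q) ≤ m := by
    intro q
    have h1 := (hexp _ (hmem q)).2
    have h2 := exp_pos (-b * (u q + 1))
    constructor <;> simp only [hh] <;> nlinarith
  set θ := (K + 1) * exp (-b * 2) with hθ
  have hθ0 : 0 < θ := mul_pos (by positivity) (exp_pos _)
  set C := S * n + c * S * √S + 2 * (2 * K + 1) * S with hC
  have hC0 : 0 ≤ C := by positivity
  set D := sqDist 0 y with hD
  have hD0 : 0 ≤ D := sqDist_nonneg _ _
  obtain ⟨δ, hδ0, hδ1, hδC, hδD⟩ := exists_pos_mul_lt_and_mul_le (mul_pos hm0 hθ0) hm0 hC0 hD0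
  have hQle : ∀ q, gradSq u q + -2 * G (u q) ≤ gradSq u q := by
    intro q
    have h1 := hFpos _ (hmem q)
    have h2 := (hh0 q).1
    simp only [hGdef]
    linarith
  have hQc : Continuous fun q => gradSq u q + -2 * G (u q) := by
    have h1 := (contDiff_gradSq hu).continuous
    have h2 := hG.continuous
    have h3 := hu.continuous
    fun_prop
  obtain ⟨p, hp⟩ := exists_isMax_sub_sqDist hQc (fun q => (hQle q).trans (hS q)) (pow_pos hδ0 2)
  have hloc : IsLocalMax (fun q => gradSq u q + (-2 * G (u q) + -δ ^ 2 * sqDist 0 q)) p :=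
    Filter.Eventually.of_forall fun q => by
      have := hp q
      simp only at this ⊢
      linarith
  have key := modica_inequality_of_isLocalMax hF hG hu heq (sq_nonneg δ) hloc
  have hQy : m ≤ gradSq u y + -2 * G (u y) + -δ ^ 2 * sqDist 0 y := by
    have h1 := (hh0 y).2
    simp only [hGdef]
    rw [← hD]
    nlinarith
  have hpy := hp y
  set w := gradSq u p with hw
  set r := sqDist 0 p with hr
  have hr0 : 0 ≤ r := sqDist_nonneg _ _
  have hmw : m ≤ w := by nlinarith [hQle p, mul_nonneg (sq_nonneg δ) hr0]
  have hwS : w ≤ S := hS p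
  have hδr : δ * √r ≤ √S := by
    rw [← Real.sqrt_sq hδ0.le, ← Real.sqrt_mul (sq_nonneg δ)]
    exact Real.sqrt_le_sqrt (by nlinarith [hQle p])
  have hpk : p k ≤ √r := by
    refine (le_abs_self _).trans (Real.abs_le_sqrt ?_)
    simpa using sq_le_sqDist 0 p k
  rw [deriv_deriv_add_barrier hF, deriv_add_barrier hF, hb] at key
  set e := exp (-b * (u p + 1)) with he
  obtain ⟨he2, he1⟩ := hexp _ (hmem p)
  rw [← he] at he1 he2
  have he0 : 0 < e := exp_pos _
  simp only [add_sub_cancel_left, sub_sub_cancel] at key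
  have hF1 := hK1 _ (hmem p)
  have hF1' := abs_le.1 hF1
  have hGabs : |deriv F (u p) + (K + 1) * e| ≤ 2 * K + 1 := by
    refine (abs_add_le _ _).trans ?_
    rw [abs_of_nonneg (by positivity : (0 : ℝ) ≤ (K + 1) * e)]
    nlinarith
  have hlower : m * θ ≤ w * ((deriv F (u p) + (K + 1) * e) * ((K + 1) * e) +
      b * ((K + 1) * e) * w) := by
    have hθe : θ ≤ (K + 1) * e := mul_le_mul_of_nonneg_left he2 (by positivity)
    have hbw : K + 1 ≤ b * w := hb ▸ mul_le_mul_of_nonneg_left hmw hb0.le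
    have h1 : 1 ≤ deriv F (u p) + (K + 1) * e + b * w := by
      linarith [hF1'.1, mul_pos (by positivity : (0 : ℝ) < K + 1) he0]
    have h2 : (K + 1) * e ≤ (K + 1) * e * (deriv F (u p) + (K + 1) * e + b * w) :=
      le_mul_of_one_le_right (by positivity) h1
    calc m * θ ≤ w * ((K + 1) * e * (deriv F (u p) + (K + 1) * e + b * w)) :=
          mul_le_mul hmw (hθe.trans h2) hθ0.le (hm0.le.trans hmw)
      _ = _ := by ring
  have hw0 : 0 ≤ w := hm0.le.trans hmw
  have hupper1 : w * (δ ^ 2 * (n + c * p k)) ≤ δ * (S * n + c * S * √S) := by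
    have h1 : δ * (n + c * p k) ≤ n + c * √S := by
      have h2 : δ * p k ≤ √S := (mul_le_mul_of_nonneg_left hpk hδ0.le).trans hδr
      have h3 : δ * n ≤ n := mul_le_of_le_one_left (Nat.cast_nonneg n) hδ1
      nlinarith
    calc w * (δ ^ 2 * (n + c * p k)) = δ * (w * (δ * (n + c * p k))) := by ring
      _ ≤ δ * (w * (n + c * √S)) := by gcongr
      _ ≤ δ * (S * (n + c * √S)) := by gcongr
      _ = _ := by ring
  have hupper2 : 2 * δ ^ 2 * |deriv F (u p) + (K + 1) * e| * (√w * √r) ≤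
      δ * (2 * (2 * K + 1) * S) := by
    calc 2 * δ ^ 2 * |deriv F (u p) + (K + 1) * e| * (√w * √r)
        = δ * (2 * |deriv F (u p) + (K + 1) * e| * (√w * (δ * √r))) := by ring
      _ ≤ δ * (2 * (2 * K + 1) * (√S * √S)) := by gcongr
      _ = _ := by rw [Real.mul_self_sqrt hS0]
  rw [hC] at hδC
  linarith

end Modica


/-- Modica-type gradient estimate for traveling waves (Proposition 4.5):
if `F ≥ 0` on `[-1,1]`, `c > 0` and `u` is a `C³` solution of
`Δu + c ∂u/∂xₙ = F'(u)` on `ℝⁿ` with `|u| ≤ 1`, then `|∇u|² ≤ 2F(u)`. -/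
theorem modica_gradient_estimate_traveling_wave
    (n : ℕ) (hn : 1 ≤ n)
    (F : ℝ → ℝ) (hF : ContDiff ℝ 2 F)
    (hFpos : ∀ s ∈ Set.Icc (-1 : ℝ) 1, 0 ≤ F s)
    (c : ℝ) (hc : 0 < c)
    (u : (Fin n → ℝ) → ℝ) (hu : ContDiff ℝ 3 u)
    (hbd : ∀ p : Fin n → ℝ, |u p| ≤ 1)
    (heq : ∀ p : Fin n → ℝ,
      (∑ i : Fin n, pd i (pd i u) p) + c * pd ⟨n - 1, by omega⟩ u p =
        deriv F (u p)) :
    ∀ p : Fin n → ℝ, ∑ i : Fin n, (pd i u p) ^ 2 ≤ 2 * F (u p) := by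
  exact gradSq_le_two_mul (k := ⟨n - 1, by omega⟩) hF hFpos hc.le hu hbd heq
end

section
/- Let u be a monotone traveling wave solution of the balanced Allen-Cahn equation in the plane, and assume u and its derivatives up to third order are bounded. Then ∂u/∂y(x,y) → 0 as |x| → ∞ uniformly in y: for every ε > 0 there exists R > 0 such that |∂u/∂y(x,y)| < ε whenever |x| ≥ R and y ∈ ℝ. -/
open Real Filter MeasureTheory Metric

noncomputable def pdx (u : ℝ → ℝ → ℝ) (x y : ℝ) : ℝ := deriv (fun t => u t y) x

noncomputable def pdy (u : ℝ → ℝ → ℝ) (x y : ℝ) : ℝ := deriv (fun t => u x t) y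

noncomputable def pdxx (u : ℝ → ℝ → ℝ) (x y : ℝ) : ℝ := deriv (fun t => pdx u t y) x

noncomputable def pdyy (u : ℝ → ℝ → ℝ) (x y : ℝ) : ℝ := deriv (fun t => pdy u x t) y

/-- `F` is a balanced double-well potential. -/
def BalancedDoubleWell (F : ℝ → ℝ) : Prop :=
  ContDiff ℝ 3 F ∧ deriv F (-1) = 0 ∧ deriv F 1 = 0 ∧
  0 < deriv (deriv F) (-1) ∧ 0 < deriv (deriv F) 1 ∧
  (∀ s ∈ Set.Ioo (-1 : ℝ) 0, 0 < deriv F s) ∧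
  (∀ s ∈ Set.Ioo (0 : ℝ) 1, deriv F s < 0) ∧
  F (-1) = 0 ∧ F 1 = 0

/-- `u` is a `C³` solution of `Δu + c uᵧ = F'(u)` on `ℝ²` with `|u| ≤ 1`
which is monotone in `y`. -/
def IsSolution (F : ℝ → ℝ) (c : ℝ) (u : ℝ → ℝ → ℝ) : Prop :=
  ContDiff ℝ 3 (fun p : ℝ × ℝ => u p.1 p.2) ∧
  (∀ x y : ℝ, pdxx u x y + pdyy u x y + c * pdy u x y = deriv F (u x y)) ∧
  (∀ x y : ℝ, |u x y| ≤ 1) ∧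
  (∀ x y : ℝ, 0 < pdy u x y)

/-- A monotone traveling wave solution connecting `-1` to `1`. -/
def IsTravelingWave (F : ℝ → ℝ) (c : ℝ) (u : ℝ → ℝ → ℝ) : Prop :=
  IsSolution F c u ∧
  (∀ x : ℝ, Tendsto (fun y => u x y) atTop (nhds 1)) ∧
  (∀ x : ℝ, Tendsto (fun y => u x y) atBot (nhds (-1)))

/-- A uniformly continuous square integrable function vanishes at infinity. -/
theorem UniformContinuous.tendsto_cocompact_of_integrable_sq {E : Type*} [NormedAddCommGroup E]
    [NormedSpace ℝ E] [FiniteDimensional ℝ E] [MeasurableSpace E] [BorelSpace E]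
    {μ : Measure E} [μ.IsAddHaarMeasure] {g : E → ℝ} (hg : UniformContinuous g)
    (hint : Integrable (fun p => g p ^ 2) μ) : Tendsto g (cocompact E) (nhds 0) := by
  have : ProperSpace E := FiniteDimensional.proper ℝ E
  rw [Metric.tendsto_nhds]
  intro ε hε
  obtain ⟨r, hr, hgr⟩ := Metric.uniformContinuous_iff.1 hg (ε / 2) (by positivity)
  have hball : 0 < μ.real (ball (0 : E) r) :=
    ENNReal.toReal_pos (measure_ball_pos μ 0 hr).ne' measure_ball_lt_top.ne
  have hlim := (aecover_closedBall (μ := μ) (x := (0 : E))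
    tendsto_id).integral_tendsto_of_countably_generated hint
  obtain ⟨R, hR⟩ := (hlim.eventually_const_lt
    (sub_lt_self _ (show 0 < (ε / 2) ^ 2 * μ.real (ball (0 : E) r) by positivity))).exists
  simp only [id] at hR
  rw [← integral_add_compl (s := closedBall (0 : E) R) isClosed_closedBall.measurableSet hint] at hR
  filter_upwards [(isCompact_closedBall (0 : E) (R + r)).compl_mem_cocompact] with p hp
  rw [Real.dist_0_eq_abs]
  by_contra! hcon
  have hsub : ball p r ⊆ (closedBall (0 : E) R)ᶜ := by
    intro q hq hq'
    apply hp
    rw [mem_closedBall] at hq' ⊢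
    linarith [dist_triangle p q 0, mem_ball'.1 hq]
  have h1 : (ε / 2) ^ 2 * μ.real (ball p r) ≤ ∫ q in ball p r, g q ^ 2 ∂μ := by
    refine setIntegral_ge_of_const_le_real measurableSet_ball measure_ball_lt_top.ne ?_
      hint.integrableOn
    intro q hq
    have h := hgr (mem_ball.1 hq)
    rw [Real.dist_eq, abs_sub_comm] at h
    rw [← sq_abs (g q)]
    gcongr
    linarith [abs_sub_abs_le_abs_sub (g p) (g q)]
  have h2 : ∫ q in ball p r, g q ^ 2 ∂μ ≤ ∫ q in (closedBall (0 : E) R)ᶜ, g q ^ 2 ∂μ :=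
    setIntegral_mono_set hint.integrableOn (ae_of_all _ fun q => sq_nonneg _)
      hsub.eventuallyLE
  rw [measureReal_def, Measure.addHaar_ball_center, ← measureReal_def] at h1
  linarith

/-- If the increments of `U` along `p` in the direction `e` vanish in the limit and the derivative
of `U` is Lipschitz, then the derivative of `U` along `p` in that direction vanishes as well. -/
theorem tendsto_fderiv_apply_of_tendsto_sub {E ι : Type*} [NormedAddCommGroup E] [NormedSpace ℝ E]
    {U : E → ℝ} (hU : Differentiable ℝ U) {C : NNReal} (hC : LipschitzWith C (fderiv ℝ U))
    {l : Filter ι} {p : ι → E} {e : E}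
    (h : ∀ t : ℝ, Tendsto (fun i => U (p i + t • e) - U (p i)) l (nhds 0)) :
    Tendsto (fun i => fderiv ℝ U (p i) e) l (nhds 0) := by
  rw [Metric.tendsto_nhds]
  intro ε hε
  set K : ℝ := C * ‖e‖ * ‖e‖ with hK
  have hK0 : 0 ≤ K := by positivity
  set t : ℝ := ε / (2 * (K + 1)) with ht
  have ht0 : 0 < t := by positivity
  have htK : K * t < ε / 2 := by
    have : t * (2 * (K + 1)) = ε := by rw [ht]; field_simp
    nlinarith
  filter_upwards [Metric.tendsto_nhds.1 (h t) (t * (ε / 2)) (by positivity)] with i hi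
  rw [Real.dist_0_eq_abs] at hi ⊢
  have hmv : ‖U (p i + t • e) - U (p i) - fderiv ℝ U (p i) (p i + t • e - p i)‖
      ≤ C * (t * ‖e‖) * ‖p i + t • e - p i‖ := by
    refine (convex_closedBall (p i) (t * ‖e‖)).norm_image_sub_le_of_norm_fderiv_le'
      (𝕜 := ℝ) (fun q _ => hU q) (fun q hq => ?_) (mem_closedBall_self (by positivity)) ?_
    · rw [← dist_eq_norm]
      exact (hC.dist_le_mul q (p i)).trans (by gcongr; exact hq)
    · simp [norm_smul, abs_of_pos ht0]
  simp only [add_sub_cancel_left, map_smul, smul_eq_mul, norm_smul, Real.norm_eq_abs,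
    abs_of_pos ht0] at hmv
  have h3 : t * |fderiv ℝ U (p i) e| < t * ε := by
    calc t * |fderiv ℝ U (p i) e| = |t * fderiv ℝ U (p i) e| := by rw [abs_mul, abs_of_pos ht0]
      _ ≤ |U (p i + t • e) - U (p i)| + C * (t * ‖e‖) * (t * ‖e‖) := by
        rw [abs_sub_comm] at hmv
        linarith [abs_sub_abs_le_abs_sub (t * fderiv ℝ U (p i) e) (U (p i + t • e) - U (p i))]
      _ < t * (ε / 2) + t * (ε / 2) := by
        have : C * (t * ‖e‖) * (t * ‖e‖) = t * (K * t) := by rw [hK]; ring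
        rw [this]
        gcongr
      _ = t * ε := by ring
  exact lt_of_mul_lt_mul_left h3 ht0.le

theorem deriv_comp_prodMk_left {G : ℝ × ℝ → ℝ} (hG : Differentiable ℝ G) (x y : ℝ) :
    deriv (fun t => G (t, y)) x = fderiv ℝ G (x, y) (1, 0) :=
  ((hG (x, y)).hasFDerivAt.comp_hasDerivAt x
    ((hasDerivAt_id x).prodMk (hasDerivAt_const x y))).deriv

theorem hasDerivAt_comp_prodMk_right {G : ℝ × ℝ → ℝ} (hG : Differentiable ℝ G) (x y : ℝ) :
    HasDerivAt (fun t => G (x, t)) (fderiv ℝ G (x, y) (0, 1)) y :=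
  (hG (x, y)).hasFDerivAt.comp_hasDerivAt y
    ((hasDerivAt_const y x).prodMk (hasDerivAt_id y))

theorem hasFDerivAt_fderiv_apply {U : ℝ × ℝ → ℝ} (hU : ContDiff ℝ 2 U) (e p : ℝ × ℝ) :
    HasFDerivAt (fun q => fderiv ℝ U q e) ((fderiv ℝ (fderiv ℝ U) p).flip e) p := by
  have hD : Differentiable ℝ (fderiv ℝ U) :=
    (hU.fderiv_right (m := 1) (by norm_num)).differentiable (by norm_num)
  have h := (hD p).hasFDerivAt.clm_apply (hasFDerivAt_const e p)
  rwa [ContinuousLinearMap.comp_zero, zero_add] at h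

/-- The flux identity obtained by multiplying `ΔU + c Uᵧ = F'(U)` by `Uᵧ` and integrating over a
rectangle. -/
theorem integral_sq_fderiv_eq_boundary {F : ℝ → ℝ} (hF : ContDiff ℝ 1 F) {c : ℝ}
    {U : ℝ × ℝ → ℝ} (hU : ContDiff ℝ 2 U)
    (heq : ∀ p, fderiv ℝ (fderiv ℝ U) p (1, 0) (1, 0) + fderiv ℝ (fderiv ℝ U) p (0, 1) (0, 1)
      + c * fderiv ℝ U p (0, 1) = deriv F (U p))
    {g : ℝ × ℝ → ℝ}
    (hg : g = fun p => (fderiv ℝ U p (1, 0)) ^ 2 / 2 - (fderiv ℝ U p (0, 1)) ^ 2 / 2 + F (U p))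
    {a b : ℝ × ℝ} (hab : a ≤ b) :
    ∫ p in Set.Icc a b, c * fderiv ℝ U p (0, 1) ^ 2 =
      (((∫ x in a.1..b.1, g (x, b.2)) - ∫ x in a.1..b.1, g (x, a.2)) +
        ∫ y in a.2..b.2, -(fderiv ℝ U (b.1, y) (1, 0) * fderiv ℝ U (b.1, y) (0, 1))) -
        ∫ y in a.2..b.2, -(fderiv ℝ U (a.1, y) (1, 0) * fderiv ℝ U (a.1, y) (0, 1)) := by
  have hDc : Continuous (fderiv ℝ U) := hU.continuous_fderiv (by norm_num)
  have hUd : Differentiable ℝ U := hU.differentiable (by norm_num)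
  have hW := hasFDerivAt_fderiv_apply hU (1, 0)
  have hV := hasFDerivAt_fderiv_apply hU (0, 1)
  have hf' := fun p => ((hW p).mul (hV p)).neg
  have hg' := fun p => ((((hW p).pow 2).mul_const (1 / 2 : ℝ)).sub
    (((hV p).pow 2).mul_const (1 / 2 : ℝ))).add
    (((hF.differentiable (by norm_num)) (U p)).hasDerivAt.comp_hasFDerivAt p (hUd p).hasFDerivAt)
  have hgg : g = fun p => (fderiv ℝ U p (1, 0)) ^ 2 * (1 / 2) -
      (fderiv ℝ U p (0, 1)) ^ 2 * (1 / 2) + F (U p) := by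
    rw [hg]; ext p; ring
  have hdiv : ∀ p, c * fderiv ℝ U p (0, 1) ^ 2 =
      (-(fderiv ℝ U p (1, 0) • (fderiv ℝ (fderiv ℝ U) p).flip (0, 1) +
        fderiv ℝ U p (0, 1) • (fderiv ℝ (fderiv ℝ U) p).flip (1, 0))) (1, 0) +
      (((1 / 2 : ℝ) • ((2 • fderiv ℝ U p (1, 0) ^ (2 - 1)) •
          (fderiv ℝ (fderiv ℝ U) p).flip (1, 0)) -
        (1 / 2 : ℝ) • ((2 • fderiv ℝ U p (0, 1) ^ (2 - 1)) •
          (fderiv ℝ (fderiv ℝ U) p).flip (0, 1))) + deriv F (U p) • fderiv ℝ U p) (0, 1) :=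
      fun p => by
    have hs : fderiv ℝ (fderiv ℝ U) p (1, 0) (0, 1) = fderiv ℝ (fderiv ℝ U) p (0, 1) (1, 0) :=
      (hU.contDiffAt (x := p)).isSymmSndFDerivAt (by simp) (1, 0) (0, 1)
    simp [hs, ← heq p]
    ring
  have hcont : Continuous fun p => c * fderiv ℝ U p (0, 1) ^ 2 := by fun_prop
  have hgc : Continuous g := by
    have := hF.continuous
    have := hU.continuous
    rw [hg]; fun_prop
  rw [funext hdiv]
  refine integral_divergence_prod_Icc_of_hasFDerivAt_of_le _ g _ _ a b hab (by fun_prop)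
    hgc.continuousOn (fun p _ => hf' p) (fun p _ => ?_) ?_
  · rw [hgg]
    exact hg' p
  · rw [← funext hdiv]
    exact hcont.integrableOn_Icc

/-- The flux of `Uₓ Uᵧ` through a vertical segment is controlled by the oscillation of `U`. -/
theorem abs_integral_fderiv_mul_fderiv_le {U : ℝ × ℝ → ℝ} (hU : ContDiff ℝ 2 U)
    (hpos : ∀ p, 0 ≤ fderiv ℝ U p (0, 1)) (hle : ∀ p, |U p| ≤ 1) {M : ℝ}
    (hM : ∀ p, |fderiv ℝ U p (1, 0)| ≤ M) (x : ℝ) {s t : ℝ} (hst : s ≤ t) :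
    |∫ y in s..t, -(fderiv ℝ U (x, y) (1, 0) * fderiv ℝ U (x, y) (0, 1))| ≤ 2 * M := by
  have hDc : Continuous (fderiv ℝ U) := hU.continuous_fderiv (by norm_num)
  have hUd : Differentiable ℝ U := hU.differentiable (by norm_num)
  have hM0 : 0 ≤ M := (abs_nonneg _).trans (hM (0, 0))
  have hcV : Continuous fun y => fderiv ℝ U (x, y) (0, 1) := by fun_prop
  have hftc : ∫ y in s..t, fderiv ℝ U (x, y) (0, 1) = U (x, t) - U (x, s) :=
    intervalIntegral.integral_eq_sub_of_hasDerivAt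
      (fun y _ => hasDerivAt_comp_prodMk_right hUd x y) (hcV.intervalIntegrable _ _)
  calc |∫ y in s..t, -(fderiv ℝ U (x, y) (1, 0) * fderiv ℝ U (x, y) (0, 1))|
      ≤ ∫ y in s..t, M * fderiv ℝ U (x, y) (0, 1) := by
        rw [← Real.norm_eq_abs]
        refine intervalIntegral.norm_integral_le_of_norm_le hst (ae_of_all _ fun y _ => ?_)
          ((hcV.const_mul M).intervalIntegrable _ _)
        rw [norm_neg, norm_mul, Real.norm_eq_abs, Real.norm_eq_abs, abs_of_nonneg (hpos _)]
        exact mul_le_mul_of_nonneg_right (hM _) (hpos _)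
    _ = M * (U (x, t) - U (x, s)) := by rw [intervalIntegral.integral_const_mul, hftc]
    _ ≤ 2 * M := by nlinarith [abs_le.1 (hle (x, t)), abs_le.1 (hle (x, s))]

/-- A finite-energy bound: for a monotone bounded solution connecting two zeros of `F`,
the derivative `Uᵧ` is square integrable over the plane. -/
theorem integrable_sq_fderiv {F : ℝ → ℝ} (hF : ContDiff ℝ 1 F) (hF1 : F 1 = 0)
    (hFn : F (-1) = 0) {c : ℝ} (hc : 0 < c)
    {U : ℝ × ℝ → ℝ} (hU : ContDiff ℝ 2 U)
    (heq : ∀ p, fderiv ℝ (fderiv ℝ U) p (1, 0) (1, 0) + fderiv ℝ (fderiv ℝ U) p (0, 1) (0, 1)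
      + c * fderiv ℝ U p (0, 1) = deriv F (U p))
    (hpos : ∀ p, 0 ≤ fderiv ℝ U p (0, 1)) (hle : ∀ p, |U p| ≤ 1)
    (htop : ∀ x, Tendsto (fun y => U (x, y)) atTop (nhds 1))
    (hbot : ∀ x, Tendsto (fun y => U (x, y)) atBot (nhds (-1)))
    {M : ℝ} (hM : ∀ p, ‖fderiv ℝ U p‖ ≤ M) {C : NNReal} (hC : LipschitzWith C (fderiv ℝ U)) :
    Integrable fun p => fderiv ℝ U p (0, 1) ^ 2 := by
  have hDc : Continuous (fderiv ℝ U) := hU.continuous_fderiv (by norm_num)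
  have hUd : Differentiable ℝ U := hU.differentiable (by norm_num)
  have hM1 : ∀ p, |fderiv ℝ U p (1, 0)| ≤ M := fun p =>
    ((fderiv ℝ U p).le_opNorm _).trans (by simpa using hM p)
  have hM2 : ∀ p, |fderiv ℝ U p (0, 1)| ≤ M := fun p =>
    ((fderiv ℝ U p).le_opNorm _).trans (by simpa using hM p)
  set g : ℝ × ℝ → ℝ := fun p =>
    (fderiv ℝ U p (1, 0)) ^ 2 / 2 - (fderiv ℝ U p (0, 1)) ^ 2 / 2 + F (U p) with hg
  have hgc : Continuous g := by
    have := hF.continuous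
    have := hU.continuous
    fun_prop
  obtain ⟨B, hB⟩ := isCompact_Icc.exists_bound_of_continuousOn
    (s := Set.Icc (-1 : ℝ) 1) hF.continuous.continuousOn
  have hgB : ∀ p, ‖g p‖ ≤ M ^ 2 + B := fun p => by
    have h1 := sq_le_sq' (abs_le.1 (hM1 p)).1 (abs_le.1 (hM1 p)).2
    have h2 := sq_le_sq' (abs_le.1 (hM2 p)).1 (abs_le.1 (hM2 p)).2
    have h3 := abs_le.1 (hB (U p) (abs_le.1 (hle p)))
    rw [Real.norm_eq_abs, abs_le]
    constructor <;> simp only [hg] <;>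
      nlinarith [sq_nonneg (fderiv ℝ U p (1, 0)), sq_nonneg (fderiv ℝ U p (0, 1))]
  have hg0 : ∀ (l : Filter ℝ) (s : ℝ), F s = 0 →
      (∀ t, Tendsto (fun y => y + t) l l) →
      (∀ x, Tendsto (fun y => U (x, y)) l (nhds s)) →
      ∀ x, Tendsto (fun y => g (x, y)) l (nhds 0) := by
    intro l s hs hshift hl x
    have h1 : Tendsto (fun y => fderiv ℝ U (x, y) (1, 0)) l (nhds 0) :=
      tendsto_fderiv_apply_of_tendsto_sub hUd hC fun t => by
        simpa using (hl (x + t)).sub (hl x)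
    have h2 : Tendsto (fun y => fderiv ℝ U (x, y) (0, 1)) l (nhds 0) :=
      tendsto_fderiv_apply_of_tendsto_sub hUd hC fun t => by
        simpa using ((hl x).comp (hshift t)).sub (hl x)
    have h3 := (hF.continuous.tendsto s).comp (hl x)
    simpa [hg, hs] using (((h1.pow 2).div_const 2).sub ((h2.pow 2).div_const 2)).add h3
  have hgint : ∀ (l : Filter ℝ) [l.IsCountablyGenerated] (a b : ℝ),
      (∀ x, Tendsto (fun y => g (x, y)) l (nhds 0)) →
      Tendsto (fun y => ∫ x in a..b, g (x, y)) l (nhds 0) := by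
    intro l _ a b hl
    have := intervalIntegral.tendsto_integral_filter_of_dominated_convergence
      (μ := volume) (a := a) (b := b) (l := l) (F := fun y x => g (x, y)) (f := fun _ => 0)
      (fun _ => M ^ 2 + B)
      (Eventually.of_forall fun y => (by fun_prop : Continuous _).aestronglyMeasurable)
      (Eventually.of_forall fun y => ae_of_all _ fun x _ => hgB _)
      (by simp) (ae_of_all _ fun x _ => hl x)
    simpa using this
  have hgtop := hg0 atTop 1 hF1 (fun t => tendsto_atTop_add_const_right _ t tendsto_id) htop
  have hgbot := hg0 atBot (-1) hFn (fun t => tendsto_atBot_add_const_right _ t tendsto_id) hbot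
  have hcont : Continuous fun p => c * fderiv ℝ U p (0, 1) ^ 2 := by fun_prop
  have hbox : ∀ A : ℝ, 0 ≤ A →
      ∫ p in Set.Icc (-A, -A) (A, A), c * fderiv ℝ U p (0, 1) ^ 2 ≤ 4 * M := by
    intro A hA
    have hlim : Tendsto (fun N : ℝ =>
        (∫ x in (-A)..A, g (x, N)) - (∫ x in (-A)..A, g (x, -N)) + 4 * M) atTop
        (nhds (4 * M)) := by
      simpa using ((hgint atTop (-A) A hgtop).sub
        ((hgint atBot (-A) A hgbot).comp tendsto_neg_atTop_atBot)).add_const (4 * M)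
    refine ge_of_tendsto hlim ?_
    filter_upwards [eventually_ge_atTop A] with N hN
    calc ∫ p in Set.Icc (-A, -A) (A, A), c * fderiv ℝ U p (0, 1) ^ 2
        ≤ ∫ p in Set.Icc (-A, -N) (A, N), c * fderiv ℝ U p (0, 1) ^ 2 := by
          refine setIntegral_mono_set hcont.integrableOn_Icc
            (ae_of_all _ fun p => by positivity) (LE.le.eventuallyLE ?_)
          exact Set.Icc_subset_Icc ⟨le_rfl, neg_le_neg hN⟩ ⟨le_rfl, hN⟩
      _ ≤ _ := by
          have hab : ((-A, -N) : ℝ × ℝ) ≤ (A, N) := ⟨by simp; linarith, by simp; linarith⟩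
          rw [integral_sq_fderiv_eq_boundary hF hU heq hg hab]
          have hNN : -N ≤ N := by linarith
          have h1 := abs_le.1 (abs_integral_fderiv_mul_fderiv_le hU hpos hle hM1 A hNN)
          have h2 := abs_le.1 (abs_integral_fderiv_mul_fderiv_le hU hpos hle hM1 (-A) hNN)
          dsimp only
          linarith [h1.2, h2.1]
  have hint : Integrable fun p => c * fderiv ℝ U p (0, 1) ^ 2 := by
    have hcover : AECover (volume : Measure (ℝ × ℝ)) atTop
        fun A : ℝ => Set.Icc ((-A, -A) : ℝ × ℝ) (A, A) :=
      aecover_Icc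
        (by rw [← prod_atBot_atBot_eq]
            exact tendsto_neg_atTop_atBot.prodMk tendsto_neg_atTop_atBot)
        (by rw [← prod_atTop_atTop_eq]; exact tendsto_id.prodMk tendsto_id)
    refine hcover.integrable_of_integral_bounded_of_nonneg_ae (4 * M)
      (fun A => hcont.integrableOn_Icc) (ae_of_all _ fun p => by positivity) ?_
    filter_upwards [eventually_ge_atTop 0] with A hA using hbox A hA
  simpa [hc.ne'] using hint.const_mul c⁻¹

/-- `uᵧ → 0` uniformly in `y` as `|x| → ∞` (used in the proof of Lemma 2.2). -/
theorem uy_tendsto_zero_uniformly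
    (F : ℝ → ℝ) (hF : BalancedDoubleWell F) (c : ℝ) (hc : 0 < c)
    (u : ℝ → ℝ → ℝ) (hu : IsTravelingWave F c u)
    (hbd : ∀ i : ℕ, i ≤ 3 → ∃ M : ℝ,
      ∀ p : ℝ × ℝ, ‖iteratedFDeriv ℝ i (fun q : ℝ × ℝ => u q.1 q.2) p‖ ≤ M) :
    ∀ ε > (0 : ℝ), ∃ R > (0 : ℝ), ∀ x y : ℝ, R ≤ |x| → |pdy u x y| < ε := by
  obtain ⟨hF3, -, -, -, -, -, -, hFn, hF1⟩ := hF
  obtain ⟨⟨hU3, heq, hle, hpos⟩, htop, hbot⟩ := hu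
  obtain ⟨M, hM⟩ := hbd 1 (by norm_num)
  obtain ⟨K, hK⟩ := hbd 2 (by norm_num)
  set U : ℝ × ℝ → ℝ := fun q => u q.1 q.2 with hUdef
  have hU : ContDiff ℝ 2 U := hU3.of_le (by norm_num)
  have hUd : Differentiable ℝ U := hU.differentiable (by norm_num)
  have hDd : Differentiable ℝ (fderiv ℝ U) :=
    (hU.fderiv_right (m := 1) (by norm_num)).differentiable (by norm_num)
  have hx : ∀ x y, pdx u x y = fderiv ℝ U (x, y) (1, 0) := deriv_comp_prodMk_left hUd
  have hy : ∀ x y, pdy u x y = fderiv ℝ U (x, y) (0, 1) := fun x y =>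
    (hasDerivAt_comp_prodMk_right hUd x y).deriv
  have hxx : ∀ x y, pdxx u x y = fderiv ℝ (fderiv ℝ U) (x, y) (1, 0) (1, 0) := fun x y => by
    simp only [pdxx, hx]
    rw [deriv_comp_prodMk_left (G := fun q => fderiv ℝ U q (1, 0)) (by fun_prop),
      (hasFDerivAt_fderiv_apply hU _ _).fderiv, ContinuousLinearMap.flip_apply]
  have hyy : ∀ x y, pdyy u x y = fderiv ℝ (fderiv ℝ U) (x, y) (0, 1) (0, 1) := fun x y => by
    simp only [pdyy, hy]
    rw [(hasDerivAt_comp_prodMk_right (G := fun q => fderiv ℝ U q (0, 1)) (by fun_prop) x y).deriv,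
      (hasFDerivAt_fderiv_apply hU _ _).fderiv, ContinuousLinearMap.flip_apply]
  have hC : LipschitzWith K.toNNReal (fderiv ℝ U) := by
    refine lipschitzWith_of_nnnorm_fderiv_le hDd fun p => ?_
    rw [← NNReal.coe_le_coe, coe_nnnorm, ← norm_iteratedFDeriv_one, norm_iteratedFDeriv_fderiv]
    exact (hK p).trans (Real.le_coe_toNNReal K)
  have hint := integrable_sq_fderiv (hF3.of_le (by norm_num)) hF1 hFn hc hU
    (fun p => by simpa only [← hxx, ← hyy, ← hy] using heq p.1 p.2)
    (fun p => by simpa only [← hy] using (hpos p.1 p.2).le) (fun p => hle p.1 p.2) htop hbot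
    (fun p => by simpa only [norm_iteratedFDeriv_one] using hM p) hC
  have huc : UniformContinuous fun p => fderiv ℝ U p (0, 1) :=
    (ContinuousLinearMap.apply ℝ ℝ ((0, 1) : ℝ × ℝ)).uniformContinuous.comp hC.uniformContinuous
  intro ε hε
  have hev := Metric.tendsto_nhds.1 (huc.tendsto_cocompact_of_integrable_sq hint) ε hε
  rw [← cobounded_eq_cocompact, ← comap_norm_atTop, eventually_comap] at hev
  obtain ⟨R, hR⟩ := eventually_atTop.1 hev
  refine ⟨max R 1, by positivity, fun x y hxR => ?_⟩
  have hn : R ≤ ‖((x, y) : ℝ × ℝ)‖ :=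
    (le_max_left R 1).trans (hxR.trans (norm_fst_le ((x, y) : ℝ × ℝ)))
  simpa [hy] using hR _ hn (x, y) rfl
end
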